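/- There is an absolute constant C > 0 such that the following holds. Let f : {0,1}^n → ℝ be a function whose image has size at most s (s ≥ 1) and whose sparsity is spar(f) = r ≥ 2. Then MBS(f) ≤ C·s²·(log₂ r)². -/

import Mathlib

/-- The coefficient of the monomial `s` in the unique multilinear polynomial computing
`f : {0,1}^n → ℝ` (subsets of `Fin n` identified with points of the cube),
given by Möbius inversion. -/
noncomputable def coeff {n : ℕ} (f : Finset (Fin n) → ℝ) (s : Finset (Fin n)) : ℝ :=
  ∑ t ∈ s.powerset, (-1 : ℝ) ^ (s.card - t.card) * f t

/-- The sparsity of `f`: the number of nonzero coefficients. -/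
noncomputable def sparsity {n : ℕ} (f : Finset (Fin n) → ℝ) : ℕ :=
  {s : Finset (Fin n) | coeff f s ≠ 0}.ncard

/-- The set system of non-constant monomials of `f`. -/
def mon {n : ℕ} (f : Finset (Fin n) → ℝ) : Set (Finset (Fin n)) :=
  {s | coeff f s ≠ 0 ∧ s ≠ ∅}

/-- `W f z`: the family of sets `w ⊆ [n] ∖ z` such that `f (z ∨ w) ≠ f z`. -/
def W {n : ℕ} (f : Finset (Fin n) → ℝ) (z : Finset (Fin n)) : Set (Finset (Fin n)) :=
  {w | w ⊆ zᶜ ∧ f (z ∪ w) ≠ f z}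

/-!
Setting the coordinates in `z` to one, identifying the variables inside each block `w i` and setting
the remaining ones to zero turns `f` into a function on `{0,1}^k` with at most `r` monomials whose
value changes when any single coordinate is switched on at the origin. By counting, some set `A` of
at least half of the coordinates contains no monomial of degree exceeding `d = ⌊log₂ r⌋ + 1`, so
restricting to `A` leaves a function of degree at most `d`. Composing it with the polynomial
interpolating `v ↦ [v ≠ f z]` on the at most `s` values of `f` gives a Boolean function of degree at
most `s * d` that vanishes at the origin and equals `1` at every singleton of `A`.

Averaging over the layers of `{0,1}^A` (Minsky–Papert symmetrization) produces a univariate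
polynomial `q` of degree at most `s * d` with `q 0 = 0`, `q 1 = 1` and `|q j| ≤ 1` for
`j = 0, …, |A|`. Markov's inequality forces `|A| = O((s * d) ^ 2)`.
-/

section Polynomial

open Polynomial Set

variable {P : ℝ[X]} {D : ℕ}

theorem abs_eval_derivative_one_le {M : ℝ} (hM : 0 < M) (hD : P.natDegree ≤ D)
    (hP : ∀ x ∈ Icc (-1) 1, |P.eval x| ≤ M) : |P.derivative.eval 1| ≤ D ^ 2 * M := by
  have one_sided : ∀ Q : ℝ[X], Q.natDegree ≤ D → (∀ x ∈ Icc (-1) 1, |Q.eval x| ≤ M) →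
      Q.derivative.eval 1 ≤ D ^ 2 * M := by
    intro Q hQD hQ
    have h : (derivative^[1] (C M⁻¹ * Q)).eval 1 ≤ (derivative^[1] (Chebyshev.T ℝ D)).eval 1 := by
      refine Chebyshev.eval_iterate_derivative_le_of_forall_abs_le_one le_rfl
        (natDegree_le_iff_degree_le.mp ((natDegree_C_mul_le _ _).trans hQD)) fun x hx ↦ ?_
      rw [eval_C_mul, abs_mul, abs_of_pos (inv_pos.mpr hM), inv_mul_le_one₀ hM]
      exact hQ x hx
    simpa [Chebyshev.derivative_T_eval_one, inv_mul_le_iff₀ hM, mul_comm M] using h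
  refine abs_le'.mpr ⟨one_sided P hD hP, ?_⟩
  simpa using one_sided (-P) (by simpa using hD) (by simpa using hP)

theorem abs_eval_derivative_mul_abs_sub_le {M x y : ℝ} (hM : 0 < M) (hD : P.natDegree ≤ D)
    (hP : ∀ u ∈ uIcc x y, |P.eval u| ≤ M) :
    |P.derivative.eval x| * |x - y| ≤ 2 * D ^ 2 * M := by
  set L : ℝ[X] := C ((x - y) / 2) * X + C ((x + y) / 2) with hL
  have hLD : (P.comp L).natDegree ≤ D :=
    natDegree_comp_le.trans <| (Nat.mul_le_mul hD natDegree_linear_le).trans (mul_one D).le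
  have hLmem : ∀ v ∈ Icc (-1 : ℝ) 1, L.eval v ∈ uIcc x y := by
    rintro v ⟨hv, hv'⟩
    simp only [hL, eval_add, eval_mul, eval_C, eval_X, mem_uIcc]
    rcases le_total x y with hxy | hxy
    · left; constructor <;> nlinarith
    · right; constructor <;> nlinarith
  have hL1 : L.eval 1 = x := by simp only [hL, eval_add, eval_mul, eval_C, eval_X]; ring
  have h := abs_eval_derivative_one_le hM hLD fun v hv ↦ by
    simpa only [eval_comp] using hP _ (hLmem v hv)
  have hderiv : (P.comp L).derivative.eval 1 = (x - y) / 2 * P.derivative.eval x := by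
    rw [derivative_comp, eval_mul, eval_comp, hL1]
    simp [hL]
  rw [hderiv, abs_mul, abs_div, abs_two] at h
  linarith

/-- Only the endpoint case of Markov's inequality is needed: an interior point is an endpoint of
one of the two subintervals it cuts off, and the longer one has at least half the length. -/
theorem abs_eval_derivative_mul_sub_le {M a b x : ℝ} (hM : 0 < M) (hD : P.natDegree ≤ D)
    (hP : ∀ u ∈ Icc a b, |P.eval u| ≤ M) (hx : x ∈ Icc a b) :
    |P.derivative.eval x| * (b - a) ≤ 4 * D ^ 2 * M := by
  obtain ⟨y, hy, hxy⟩ : ∃ y ∈ Icc a b, (b - a) / 2 ≤ |x - y| := by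
    have hab : a ≤ b := hx.1.trans hx.2
    rcases le_total ((a + b) / 2) x with h | h
    · exact ⟨a, left_mem_Icc.mpr hab, le_abs.mpr (.inl (by linarith))⟩
    · exact ⟨b, right_mem_Icc.mpr hab, le_abs.mpr (.inr (by linarith))⟩
  have h := abs_eval_derivative_mul_abs_sub_le hM hD fun u hu ↦ hP u (uIcc_subset_Icc hx hy hu)
  have := mul_le_mul_of_nonneg_left hxy (abs_nonneg (P.derivative.eval x))
  linarith

theorem exists_natCast_le_abs_sub_le_half {N : ℕ} {x : ℝ} (hx : x ∈ Icc 0 (N : ℝ)) :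
    ∃ j ≤ N, |x - j| ≤ 1 / 2 := by
  have hx0 : 0 ≤ x + 1 / 2 := by linarith [hx.1]
  refine ⟨⌊x + 1 / 2⌋₊, Nat.lt_succ_iff.mp ((Nat.floor_lt hx0).mpr ?_), ?_⟩
  · push_cast
    linarith [hx.2]
  · have := Nat.floor_le hx0
    have := Nat.lt_floor_add_one (x + 1 / 2)
    exact abs_le.mpr ⟨by linarith, by linarith⟩

theorem abs_eval_le_add_half {B c : ℝ} {N : ℕ} (hB : ∀ j ≤ N, |P.eval (j : ℝ)| ≤ B)
    (hc : ∀ x ∈ Icc 0 (N : ℝ), |P.derivative.eval x| ≤ c) {x : ℝ} (hx : x ∈ Icc 0 (N : ℝ)) :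
    |P.eval x| ≤ B + c / 2 := by
  obtain ⟨j, hjN, hxj⟩ := exists_natCast_le_abs_sub_le_half hx
  have hj : (j : ℝ) ∈ Icc 0 (N : ℝ) := ⟨j.cast_nonneg, Nat.cast_le.mpr hjN⟩
  have hc0 : 0 ≤ c := (abs_nonneg _).trans (hc x hx)
  have hmv : |P.eval x - P.eval (j : ℝ)| ≤ c * |x - j| :=
    (convex_Icc 0 (N : ℝ)).norm_image_sub_le_of_norm_deriv_le
      (fun u _ ↦ P.differentiableAt) (fun u hu ↦ by simpa using hc u hu) hj hx
  calc |P.eval x| ≤ |P.eval (j : ℝ)| + |P.eval x - P.eval (j : ℝ)| := by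
        simpa using abs_add_le (P.eval (j : ℝ)) (P.eval x - P.eval (j : ℝ))
    _ ≤ B + c * (1 / 2) := add_le_add (hB j hjN) (hmv.trans (by gcongr))
    _ = B + c / 2 := by ring

/-- The Ehlich–Zeller and Rivlin–Cheney argument. If `c` is the maximum of `|P'|` on `[0, N]`, then
`|P| ≤ 1 + c / 2` there, so Markov's inequality bounds `c` in terms of itself. -/
theorem le_six_mul_sq_of_abs_eval_natCast_le_one {N : ℕ} (hD : P.natDegree ≤ D)
    (hP : ∀ j ≤ N, |P.eval (j : ℝ)| ≤ 1)
    (hslope : ∃ x ∈ Icc 0 (N : ℝ), 1 ≤ |P.derivative.eval x|) : N ≤ 6 * D ^ 2 := by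
  obtain ⟨x₀, hx₀, hx₀_slope⟩ := hslope
  obtain ⟨x₁, hx₁, hmax⟩ := isCompact_Icc.exists_isMaxOn ⟨x₀, hx₀⟩
    (P.derivative.continuous.abs.continuousOn (s := Icc 0 (N : ℝ)))
  set c := |P.derivative.eval x₁|
  have hc : 1 ≤ c := hx₀_slope.trans (hmax hx₀)
  have hmarkov : c * (N - 0) ≤ 4 * D ^ 2 * (1 + c / 2) :=
    abs_eval_derivative_mul_sub_le (by linarith) hD
      (fun u hu ↦ abs_eval_le_add_half hP (fun _ hv ↦ hmax hv) hu) hx₁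
  have : c * N ≤ c * (6 * D ^ 2) := by nlinarith [sq_nonneg (D : ℝ)]
  exact_mod_cast le_of_mul_le_mul_left this (by linarith)

end Polynomial

section Cube

open Finset
open scoped Function

variable {α : Type*} [DecidableEq α]

/-- The monomial `∏ i ∈ t, x i` as a function on the cube `{0,1}^α`, whose points are identified
with finite subsets of `α`. -/
noncomputable def cubeMonomial (t x : Finset α) : ℝ :=
  if t ⊆ x then 1 else 0

/-- The functions on the cube `{0,1}^α` computed by multilinear polynomials of degree at most `d`,
encoded as the span of the monomials of degree at most `d`. -/
noncomputable def cubeDegreeLE (α : Type*) [DecidableEq α] (d : ℕ) :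
    Submodule ℝ (Finset α → ℝ) :=
  Submodule.span ℝ (cubeMonomial '' {t | #t ≤ d})

theorem cubeMonomial_mul (t u : Finset α) :
    cubeMonomial t * cubeMonomial u = cubeMonomial (t ∪ u) := by
  ext x
  simp [cubeMonomial, union_subset_iff, ← ite_and, and_comm]

theorem cubeMonomial_inter (t A y : Finset α) :
    cubeMonomial t (y ∩ A) = if t ⊆ A then cubeMonomial t y else 0 := by
  by_cases ht : t ⊆ A <;> simp [cubeMonomial, subset_inter_iff, ht]

theorem cubeMonomial_mem_cubeDegreeLE {t : Finset α} {d : ℕ} (ht : #t ≤ d) :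
    cubeMonomial t ∈ cubeDegreeLE α d :=
  Submodule.subset_span ⟨t, ht, rfl⟩

theorem cubeDegreeLE_mono : Monotone (cubeDegreeLE α) := fun _ _ h ↦
  Submodule.span_mono <| Set.image_mono fun _ ht ↦ le_trans ht h

theorem one_mem_cubeDegreeLE (d : ℕ) : (1 : Finset α → ℝ) ∈ cubeDegreeLE α d := by
  have h : (1 : Finset α → ℝ) = cubeMonomial ∅ := by ext x; simp [cubeMonomial]
  exact h ▸ cubeMonomial_mem_cubeDegreeLE (Nat.zero_le d)

theorem mul_mem_cubeDegreeLE {d e : ℕ} {f g : Finset α → ℝ} (hf : f ∈ cubeDegreeLE α d)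
    (hg : g ∈ cubeDegreeLE α e) : f * g ∈ cubeDegreeLE α (d + e) := by
  have h := Submodule.mul_mem_mul hf hg
  rw [cubeDegreeLE, cubeDegreeLE, Submodule.span_mul_span] at h
  refine Submodule.span_le.mpr ?_ h
  rintro _ ⟨_, ⟨t, ht, rfl⟩, _, ⟨u, hu, rfl⟩, rfl⟩
  simp only [cubeMonomial_mul]
  exact cubeMonomial_mem_cubeDegreeLE ((card_union_le t u).trans (Nat.add_le_add ht hu))

theorem pow_mem_cubeDegreeLE {d : ℕ} {g : Finset α → ℝ} (hg : g ∈ cubeDegreeLE α d) (m : ℕ) :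
    g ^ m ∈ cubeDegreeLE α (m * d) := by
  induction m with
  | zero => simpa using one_mem_cubeDegreeLE 0
  | succ m ih =>
    rw [pow_succ, Nat.succ_mul]
    exact mul_mem_cubeDegreeLE ih hg

open Polynomial in
theorem aeval_mem_cubeDegreeLE {d m : ℕ} {g : Finset α → ℝ} (hg : g ∈ cubeDegreeLE α d)
    {p : ℝ[X]} (hp : p.natDegree ≤ m) : aeval g p ∈ cubeDegreeLE α (m * d) := by
  rw [aeval_eq_sum_range]
  refine Submodule.sum_mem _ fun i hi ↦ Submodule.smul_mem _ _ ?_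
  have him : i ≤ m := (Nat.lt_succ_iff.mp (mem_range.mp hi)).trans hp
  exact cubeDegreeLE_mono (Nat.mul_le_mul_right d him) (pow_mem_cubeDegreeLE hg i)

theorem comp_mem_cubeDegreeLE {d : ℕ} {g : Finset α → ℝ} (hg : g ∈ cubeDegreeLE α d)
    {S : Finset ℝ} (hS : ∀ x, g x ∈ S) (φ : ℝ → ℝ) : φ ∘ g ∈ cubeDegreeLE α (#S * d) := by
  have hinj : Set.InjOn (id : ℝ → ℝ) S := Function.injective_id.injOn
  have h : φ ∘ g = Polynomial.aeval g (Lagrange.interpolate S id φ) := by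
    ext x
    rw [← Pi.evalAlgHom_apply ℝ (fun _ : Finset α ↦ ℝ) x (Polynomial.aeval g _),
      ← Polynomial.aeval_algHom_apply, Pi.evalAlgHom_apply, Polynomial.coe_aeval_eq_eval]
    exact (Lagrange.eval_interpolate_at_node φ hinj (hS x)).symm
  rw [h]
  exact aeval_mem_cubeDegreeLE hg <|
    Polynomial.natDegree_le_of_degree_le (Lagrange.degree_interpolate_lt φ hinj).le

theorem sum_powersetCard_cubeMonomial {t A : Finset α} (ht : t ⊆ A) (j : ℕ) :
    (∑ x ∈ A.powersetCard j, cubeMonomial t x) * (#A).choose #t =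
      (#A).choose j * j.choose #t := by
  have hcount : ∑ x ∈ A.powersetCard j, cubeMonomial t x = #{x ∈ A.powersetCard j | t ⊆ x} := by
    simp [cubeMonomial]
  rw [hcount]
  norm_cast
  rcases le_or_gt #t j with htj | htj
  · rw [card_filter_powersetCard_subset t A j ht htj, Nat.choose_mul htj, mul_comm]
  · have hempty : {x ∈ A.powersetCard j | t ⊆ x} = ∅ := filter_eq_empty_iff.mpr fun x hx hxt ↦
      htj.not_ge ((mem_powersetCard.mp hx).2 ▸ card_le_card hxt)
    rw [hempty, Nat.choose_eq_zero_of_lt htj, card_empty, zero_mul, mul_zero]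

open Polynomial in
theorem exists_natDegree_le_sum_powersetCard_cubeMonomial (A t : Finset α) :
    ∃ q : ℝ[X], q.natDegree ≤ #t ∧ ∀ j : ℕ,
      ∑ x ∈ A.powersetCard j, cubeMonomial t x = (#A).choose j * q.eval (j : ℝ) := by
  by_cases ht : t ⊆ A
  · refine ⟨C ((#t).factorial * (#A).choose #t : ℝ)⁻¹ * descPochhammer ℝ #t,
      (natDegree_C_mul_le _ _).trans (descPochhammer_natDegree ℝ #t).le, fun j ↦ ?_⟩
    have hchoose : ((#A).choose #t : ℝ) ≠ 0 :=
      Nat.cast_ne_zero.mpr (Nat.choose_pos (card_le_card ht)).ne'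
    have hfact : ((#t).factorial : ℝ) ≠ 0 := Nat.cast_ne_zero.mpr (Nat.factorial_ne_zero _)
    rw [eq_div_of_mul_eq hchoose (sum_powersetCard_cubeMonomial ht j), eval_C_mul,
      descPochhammer_eval_eq_descFactorial, Nat.descFactorial_eq_factorial_mul_choose]
    push_cast
    field_simp
  · refine ⟨0, by simp, fun j ↦ ?_⟩
    rw [eval_zero, mul_zero]
    exact sum_eq_zero fun x hx ↦ if_neg fun htx ↦ ht (htx.trans (mem_powersetCard.mp hx).1)

open Polynomial in
theorem exists_natDegree_le_sum_powersetCard (A : Finset α) {D : ℕ} {h : Finset α → ℝ}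
    (hh : h ∈ cubeDegreeLE α D) :
    ∃ q : ℝ[X], q.natDegree ≤ D ∧ ∀ j : ℕ,
      ∑ x ∈ A.powersetCard j, h x = (#A).choose j * q.eval (j : ℝ) := by
  induction hh using Submodule.span_induction with
  | mem _ hg =>
    obtain ⟨t, ht, rfl⟩ := hg
    obtain ⟨q, hq, hqt⟩ := exists_natDegree_le_sum_powersetCard_cubeMonomial A t
    exact ⟨q, hq.trans ht, hqt⟩
  | zero => exact ⟨0, by simp, by simp⟩
  | add f g _ _ hf hg =>
    obtain ⟨p, hp, hpf⟩ := hf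
    obtain ⟨q, hq, hqg⟩ := hg
    refine ⟨p + q, natDegree_add_le_of_degree_le hp hq, fun j ↦ ?_⟩
    simp only [Pi.add_apply, sum_add_distrib, hpf, hqg, eval_add, mul_add]
  | smul a f _ hf =>
    obtain ⟨p, hp, hpf⟩ := hf
    refine ⟨C a * p, (natDegree_C_mul_le _ _).trans hp, fun j ↦ ?_⟩
    simp only [Pi.smul_apply, smul_eq_mul, ← mul_sum, hpf, eval_C_mul, mul_left_comm]

theorem card_le_six_mul_sq_of_mem_cubeDegreeLE {A : Finset α} {D : ℕ} {h : Finset α → ℝ}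
    (hD : h ∈ cubeDegreeLE α D) (hbound : ∀ x ⊆ A, |h x| ≤ 1) (hempty : h ∅ = 0)
    (hsingleton : ∀ i ∈ A, h {i} = 1) : #A ≤ 6 * D ^ 2 := by
  rcases A.eq_empty_or_nonempty with rfl | hA
  · simp
  obtain ⟨q, hqD, hq⟩ := exists_natDegree_le_sum_powersetCard A hD
  have hq_bound : ∀ j ≤ #A, |q.eval (j : ℝ)| ≤ 1 := fun j hj ↦ by
    have hchoose : (0 : ℝ) < (#A).choose j := Nat.cast_pos.mpr (Nat.choose_pos hj)
    have hsum : |∑ x ∈ A.powersetCard j, h x| ≤ (#A).choose j := calc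
      _ ≤ ∑ x ∈ A.powersetCard j, |h x| := abs_sum_le_sum_abs _ _
      _ ≤ ∑ x ∈ A.powersetCard j, 1 := sum_le_sum fun x hx ↦ hbound x (mem_powersetCard.mp hx).1
      _ = (#A).choose j := by simp
    rw [hq, abs_mul, abs_of_pos hchoose] at hsum
    exact (mul_le_iff_le_one_right hchoose).mp hsum
  have hq_zero : q.eval 0 = 0 := by simpa [hempty] using (hq 0).symm
  have hq_one : q.eval 1 = 1 := by
    have hsum : ∑ x ∈ A.powersetCard 1, h x = #A := by
      simp [powersetCard_one, sum_congr rfl hsingleton]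
    simpa [hsum, hA.ne_empty] using hq 1
  obtain ⟨x, hx, hslope⟩ := exists_deriv_eq_slope (fun u ↦ q.eval u) zero_lt_one
    q.continuous.continuousOn q.differentiable.differentiableOn
  have hx_mem : x ∈ Set.Icc 0 (#A : ℝ) :=
    ⟨hx.1.le, hx.2.le.trans (Nat.one_le_cast.mpr hA.card_pos)⟩
  refine le_six_mul_sq_of_abs_eval_natCast_le_one hqD hq_bound ⟨x, hx_mem, ?_⟩
  rw [Polynomial.deriv, hq_one, hq_zero] at hslope
  simp [hslope]

theorem sum_Icc_neg_one_pow_card_sub {u x : Finset α} (hux : u ⊆ x) :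
    ∑ t ∈ Icc u x, (-1 : ℝ) ^ (#t - #u) = if u = x then 1 else 0 := by
  have hdisj : ∀ v ∈ (x \ u).powerset, Disjoint u v := fun v hv ↦
    disjoint_sdiff.mono_right (mem_powerset.mp hv)
  have hinj : Set.InjOn (u ∪ ·) (x \ u).powerset := fun v hv v' hv' h ↦ by
    rw [← union_sdiff_cancel_left (hdisj v hv), ← union_sdiff_cancel_left (hdisj v' hv')]
    exact congrArg (· \ u) h
  have hsum : ∑ v ∈ (x \ u).powerset, (-1 : ℝ) ^ #v = if x \ u = ∅ then 1 else 0 := by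
    exact_mod_cast sum_powerset_neg_one_pow_card (x := x \ u)
  rw [Icc_eq_image_powerset hux, sum_image hinj]
  calc ∑ v ∈ (x \ u).powerset, (-1 : ℝ) ^ (#(u ∪ v) - #u)
      = ∑ v ∈ (x \ u).powerset, (-1 : ℝ) ^ #v := sum_congr rfl fun v hv ↦ by
        rw [card_union_of_disjoint (hdisj v hv), Nat.add_sub_cancel_left]
    _ = if u = x then 1 else 0 := by
        simp only [hsum, sdiff_eq_empty_iff_subset, subset_antisymm_iff (a := u), hux, true_and]

theorem sum_powerset_coeff {n : ℕ} (f : Finset (Fin n) → ℝ) (x : Finset (Fin n)) :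
    ∑ t ∈ x.powerset, coeff f t = f x := by
  have hswap : ∀ t u, t ∈ x.powerset ∧ u ∈ t.powerset ↔ t ∈ Icc u x ∧ u ∈ x.powerset := by
    intro t u
    simp only [mem_powerset, mem_Icc]
    exact ⟨fun h ↦ ⟨⟨h.2, h.1⟩, h.2.trans h.1⟩, fun h ↦ ⟨h.1.2, h.1.1⟩⟩
  calc ∑ t ∈ x.powerset, coeff f t
      = ∑ u ∈ x.powerset, ∑ t ∈ Icc u x, (-1 : ℝ) ^ (#t - #u) * f u := sum_comm' hswap
    _ = ∑ u ∈ x.powerset, if u = x then f u else 0 := sum_congr rfl fun u hu ↦ by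
        rw [← sum_mul, sum_Icc_neg_one_pow_card_sub (mem_powerset.mp hu), ite_mul, one_mul,
          zero_mul]
    _ = f x := by simp

theorem sum_coeff_smul_cubeMonomial {n : ℕ} (f : Finset (Fin n) → ℝ) :
    ∑ t with coeff f t ≠ 0, coeff f t • cubeMonomial t = f := by
  ext x
  calc (∑ t with coeff f t ≠ 0, coeff f t • cubeMonomial t) x
      = ∑ t, coeff f t * cubeMonomial t x := by
        rw [Finset.sum_apply]
        exact sum_filter_of_ne fun t _ ht ↦ left_ne_zero_of_mul ht
    _ = ∑ t ∈ x.powerset, coeff f t := by simp [cubeMonomial, ← sum_filter, filter_subset_univ]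
    _ = f x := sum_powerset_coeff f x

theorem sparsity_eq_card {n : ℕ} (f : Finset (Fin n) → ℝ) :
    sparsity f = #{t | coeff f t ≠ 0} := by
  simp [sparsity, ← Set.ncard_coe_finset]

variable {ι : Type*}

/-- The indices of the blocks `w i` that meet `t`. When the blocks are disjoint and cover `t`, this
is the monomial that `t` becomes once all variables of each block are identified. -/
def blocksMeeting [Fintype ι] (w : ι → Finset α) (t : Finset α) : Finset ι :=
  {i | ¬ Disjoint (w i) t}

theorem subset_union_biUnion_iff [Fintype ι] {w : ι → Finset α}
    (hw : Pairwise (Disjoint on w)) {z t : Finset α} (ht : t ⊆ z ∪ univ.biUnion w) (y : Finset ι) :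
    t ⊆ z ∪ y.biUnion w ↔ blocksMeeting w (t \ z) ⊆ y := by
  constructor
  · intro hty i hi
    obtain ⟨a, hai, hat⟩ := not_disjoint_iff.mp (mem_filter.mp hi).2
    obtain ⟨hat, haz⟩ := mem_sdiff.mp hat
    obtain ⟨j, hjy, haj⟩ := mem_biUnion.mp ((mem_union.mp (hty hat)).resolve_left haz)
    have hij : i = j := hw.eq (not_disjoint_iff.mpr ⟨a, hai, haj⟩)
    exact hij ▸ hjy
  · intro hy a hat
    by_cases haz : a ∈ z
    · exact mem_union_left _ haz
    obtain ⟨i, -, hai⟩ := mem_biUnion.mp ((mem_union.mp (ht hat)).resolve_left haz)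
    have hiy : i ∈ y :=
      hy (mem_filter.mpr ⟨mem_univ i, not_disjoint_iff.mpr ⟨a, hai, mem_sdiff.mpr ⟨hat, haz⟩⟩⟩)
    exact mem_union_right _ (mem_biUnion.mpr ⟨i, hiy, hai⟩)

theorem cubeMonomial_union_biUnion [Fintype ι] [DecidableEq ι] {w : ι → Finset α}
    (hw : Pairwise (Disjoint on w)) (z t : Finset α) :
    (fun y ↦ cubeMonomial t (z ∪ y.biUnion w)) =
      if t ⊆ z ∪ univ.biUnion w then cubeMonomial (blocksMeeting w (t \ z)) else 0 := by
  ext y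
  split_ifs with ht
  · simp only [cubeMonomial, subset_union_biUnion_iff hw ht]
  · refine if_neg fun hty ↦ ht (hty.trans ?_)
    exact union_subset_union_right (biUnion_subset_biUnion_of_subset_left w (subset_univ y))

theorem exists_mem_span_cubeMonomial [Finite ι] [DecidableEq ι] {n : ℕ}
    (f : Finset (Fin n) → ℝ) (z : Finset (Fin n)) {w : ι → Finset (Fin n)}
    (hw : Pairwise (Disjoint on w)) :
    ∃ T : Finset (Finset ι), #T ≤ sparsity f ∧
      (fun y ↦ f (z ∪ y.biUnion w)) ∈ Submodule.span ℝ (cubeMonomial '' (T : Set (Finset ι))) := by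
  cases nonempty_fintype ι
  refine ⟨image (fun t ↦ blocksMeeting w (t \ z)) {t | coeff f t ≠ 0},
    card_image_le.trans (sparsity_eq_card f).ge, ?_⟩
  have hexpand : (fun y : Finset ι ↦ f (z ∪ y.biUnion w)) =
      ∑ t with coeff f t ≠ 0, coeff f t • fun y : Finset ι ↦ cubeMonomial t (z ∪ y.biUnion w) := by
    ext y
    conv_lhs => rw [← sum_coeff_smul_cubeMonomial f]
    simp only [Finset.sum_apply, Pi.smul_apply]
  rw [hexpand]
  refine Submodule.sum_mem _ fun t ht ↦ Submodule.smul_mem _ _ ?_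
  rw [cubeMonomial_union_biUnion hw]
  split_ifs
  · exact Submodule.subset_span ⟨_, mem_image_of_mem _ ht, rfl⟩
  · exact Submodule.zero_mem _

theorem two_pow_card_le_two_mul_card_filter [Fintype ι] :
    2 ^ Fintype.card ι ≤ 2 * #{A : Finset ι | Fintype.card ι ≤ 2 * #A} := by
  classical
  set L : Finset (Finset ι) := {A | Fintype.card ι ≤ 2 * #A} with hL
  have hcover : univ ⊆ L ∪ L.image compl := fun A _ ↦ by
    by_cases hA : Fintype.card ι ≤ 2 * #A
    · exact mem_union_left _ (by simpa [hL] using hA)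
    · refine mem_union_right _ (mem_image.mpr ⟨Aᶜ, ?_, compl_compl A⟩)
      simp only [hL, mem_filter, mem_univ, true_and, card_compl]
      lia
  calc 2 ^ Fintype.card ι = #(univ : Finset (Finset ι)) := by simp
    _ ≤ #L + #(L.image compl) := (card_le_card hcover).trans (card_union_le _ _)
    _ ≤ 2 * #L := by grw [card_image_le, two_mul]

/-- At least half of all subsets `A` are large, and at most a `2 ^ (-(d + 1))` fraction of all
subsets contains a given set of more than `d` elements. -/
theorem exists_large_forall_subset_card_le [Fintype ι] {T : Finset (Finset ι)} {d : ℕ}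
    (hT : #T < 2 ^ d) :
    ∃ A : Finset ι, Fintype.card ι ≤ 2 * #A ∧ ∀ t ∈ T, t ⊆ A → #t ≤ d := by
  classical
  by_contra! hcontains
  set L : Finset (Finset ι) := {A | Fintype.card ι ≤ 2 * #A}
  have hcover : L ⊆ {t ∈ T | d < #t}.biUnion fun t ↦ Icc t univ := fun A hA ↦ by
    obtain ⟨t, htT, htA, hdt⟩ := hcontains A (mem_filter.mp hA).2
    exact mem_biUnion.mpr ⟨t, mem_filter.mpr ⟨htT, hdt⟩, mem_Icc.mpr ⟨htA, subset_univ A⟩⟩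
  have hIcc : ∀ t ∈ ({t ∈ T | d < #t} : Finset _),
      #(Icc t univ) * 2 ^ (d + 1) ≤ 2 ^ Fintype.card ι := fun t ht ↦ by
    have hdt : d < #t := (mem_filter.mp ht).2
    have htι : #t ≤ Fintype.card ι := card_le_univ t
    rw [card_Icc_finset (subset_univ t), card_univ, ← pow_add]
    exact Nat.pow_le_pow_right two_pos (by lia)
  have hle : 2 ^ d * 2 ^ Fintype.card ι ≤ #T * 2 ^ Fintype.card ι := calc
    2 ^ d * 2 ^ Fintype.card ι ≤ 2 ^ d * (2 * #L) := by
      gcongr; exact two_pow_card_le_two_mul_card_filter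
    _ = #L * 2 ^ (d + 1) := by ring
    _ ≤ (∑ t ∈ T with d < #t, #(Icc t univ)) * 2 ^ (d + 1) := by
      gcongr; exact (card_le_card hcover).trans card_biUnion_le
    _ = ∑ t ∈ T with d < #t, #(Icc t univ) * 2 ^ (d + 1) := sum_mul _ _ _
    _ ≤ #{t ∈ T | d < #t} * 2 ^ Fintype.card ι := sum_le_card_nsmul _ _ _ hIcc
    _ ≤ #T * 2 ^ Fintype.card ι := by gcongr; exact filter_subset _ _
  exact hT.not_ge (Nat.le_of_mul_le_mul_right hle (by positivity))

theorem exists_large_comp_inter_mem_cubeDegreeLE [Fintype ι] [DecidableEq ι]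
    {T : Finset (Finset ι)} {d : ℕ} (hT : #T < 2 ^ d) {g : Finset ι → ℝ}
    (hg : g ∈ Submodule.span ℝ (cubeMonomial '' (T : Set (Finset ι)))) :
    ∃ A : Finset ι, Fintype.card ι ≤ 2 * #A ∧ (fun y ↦ g (y ∩ A)) ∈ cubeDegreeLE ι d := by
  obtain ⟨A, hA, hTA⟩ := exists_large_forall_subset_card_le hT
  refine ⟨A, hA, ?_⟩
  suffices Submodule.span ℝ (cubeMonomial '' (T : Set (Finset ι))) ≤
      (cubeDegreeLE ι d).comap (LinearMap.funLeft ℝ ℝ (· ∩ A)) from this hg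
  rw [Submodule.span_le]
  rintro _ ⟨t, ht, rfl⟩
  change (fun y ↦ cubeMonomial t (y ∩ A)) ∈ cubeDegreeLE ι d
  simp only [cubeMonomial_inter]
  split_ifs with htA
  · exact cubeMonomial_mem_cubeDegreeLE (hTA t ht htA)
  · exact Submodule.zero_mem _

theorem card_le_of_sparsity_lt_two_pow [Fintype ι] {n d : ℕ} {f : Finset (Fin n) → ℝ}
    {S : Finset ℝ} (hS : ∀ x, f x ∈ S) (hd : sparsity f < 2 ^ d)
    {z : Finset (Fin n)} {w : ι → Finset (Fin n)}
    (hw : ∀ i, w i ∈ W f z) (hdisj : Pairwise (Disjoint on w)) :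
    Fintype.card ι ≤ 12 * (#S * d) ^ 2 := by
  classical
  obtain ⟨T, hT, hspan⟩ := exists_mem_span_cubeMonomial f z hdisj
  obtain ⟨A, hA, hdeg⟩ := exists_large_comp_inter_mem_cubeDegreeLE (hT.trans_lt hd) hspan
  have hdeg_ne := comp_mem_cubeDegreeLE hdeg (fun _ ↦ hS _) fun v ↦ if v = f z then 0 else 1
  have hcard : #A ≤ 6 * (#S * d) ^ 2 := by
    refine card_le_six_mul_sq_of_mem_cubeDegreeLE hdeg_ne (fun x _ ↦ ?_) (by simp) fun i hi ↦ ?_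
    · simp only [Function.comp_apply]
      split_ifs <;> simp
    · have hne : f (z ∪ w i) ≠ f z := (hw i).2
      simp [singleton_inter_of_mem hi, hne]
  lia

end Cube

/-- For `f : {0,1}^n → ℝ` whose image has size at most `s ≥ 1` and whose sparsity is
`r ≥ 2`, `MBS(f) ≤ C·s²·(log₂ r)²`: any pairwise disjoint collection of elements of
some `W(f,z)` has size at most `C·s²·(log₂ r)²`. -/
theorem stmt15 :
    ∃ C : ℝ, 0 < C ∧
      ∀ (n s : ℕ) (f : Finset (Fin n) → ℝ),
        1 ≤ s →
        (∃ S : Finset ℝ, S.card ≤ s ∧ ∀ x, f x ∈ S) →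
        2 ≤ sparsity f →
        ∀ (z : Finset (Fin n)) (k : ℕ) (w : Fin k → Finset (Fin n)),
          (∀ i, w i ∈ W f z) →
          (∀ i j, i ≠ j → Disjoint (w i) (w j)) →
          (k : ℝ) ≤ C * (s : ℝ) ^ 2 * (Real.logb 2 (sparsity f)) ^ 2 := by
  refine ⟨48, by norm_num, ?_⟩
  rintro n s f - ⟨S, hSs, hS⟩ hr z k w hw hdisj
  set ℓ := Nat.log 2 (sparsity f)
  have hℓ : (1 : ℝ) ≤ ℓ := Nat.one_le_cast.mpr (Nat.log_pos one_lt_two hr)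
  have hℓ_logb : (ℓ : ℝ) ≤ Real.logb 2 (sparsity f) := Real.natLog_le_logb _ _
  have hk : k ≤ 12 * (S.card * (ℓ + 1)) ^ 2 := by
    simpa using card_le_of_sparsity_lt_two_pow hS (Nat.lt_pow_succ_log_self one_lt_two _) hw
      fun i j hij ↦ hdisj i j hij
  calc (k : ℝ) ≤ 12 * (S.card * (ℓ + 1)) ^ 2 := by exact_mod_cast hk
    _ ≤ 12 * (s * (2 * Real.logb 2 (sparsity f))) ^ 2 := by
      gcongr
      linarith
    _ = 48 * (s : ℝ) ^ 2 * Real.logb 2 (sparsity f) ^ 2 := by ring
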